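/- arXiv:2408.13911 — 2 statements merged into one kernel-verified Lean document; each statement's English description precedes it below -/
import Mathlib

section
/- Let L be a frame, r_1 < r_2 < ⋯ < r_n rationals, and a_1, …, a_n pairwise disjoint complemented elements of L with a_1 ⊔ ⋯ ⊔ a_n = ⊤. Let f := Σ_{i=1}^{n} r_i·χ_{a_i} (iterated sum of scaled characteristic pairs), with components u_f, v_f. Then for all p, q ∈ ℚ: u_f p = ⊤ if p < r_1; u_f p = a_{j+1} ⊔ ⋯ ⊔ a_n if r_j ≤ p < r_{j+1} (for 1 ≤ j ≤ n−1); u_f p = ⊥ if p ≥ r_n; and v_f q = ⊥ if q ≤ r_1; v_f q = a_1 ⊔ ⋯ ⊔ a_j if r_j < q ≤ r_{j+1} (for 1 ≤ j ≤ n−1); v_f q = ⊤ if q > r_n. -/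
/-- A pair of maps `u, v : ℚ → L`, encoding a real-valued function on the frame `L`
via `f(p,—) = u p`, `f(—,q) = v q`. -/
structure MP (L : Type*) where
  u : ℚ → L
  v : ℚ → L

namespace MP

variable {L : Type*} [Order.Frame L]

/-- The order on pairs: `f ≤ g` iff `u_f p ≤ u_g p` and `v_g q ≤ v_f q` for all rationals. -/
def le (f g : MP L) : Prop :=
  (∀ p : ℚ, f.u p ≤ g.u p) ∧ (∀ q : ℚ, g.v q ≤ f.v q)

/-- The sum of two pairs. -/
noncomputable def add (f g : MP L) : MP L where
  u := fun p => ⨆ t : ℚ, f.u t ⊓ g.u (p - t)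
  v := fun q => ⨆ t : ℚ, f.v t ⊓ g.v (q - t)

/-- The join of two pairs. -/
def sup (f g : MP L) : MP L where
  u := fun p => f.u p ⊔ g.u p
  v := fun q => f.v q ⊓ g.v q

/-- The negation of a pair. -/
def neg (f : MP L) : MP L where
  u := fun p => f.v (-p)
  v := fun q => f.u (-q)

end MP

/-- The zero pair `𝟎`. -/
noncomputable def zeroMP (L : Type*) [Order.Frame L] : MP L where
  u := fun p => if p < 0 then ⊤ else ⊥
  v := fun q => if q ≤ 0 then ⊥ else ⊤

/-- The scaled characteristic pair `r·χ_a`, for a rational `r` and a complemented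
element `a` with complement `ac`. -/
noncomputable def sChi {L : Type*} [Order.Frame L] (r : ℚ) (a ac : L) : MP L where
  u := fun p =>
    if 0 < r then (if p < 0 then ⊤ else if p < r then a else ⊥)
    else if r = 0 then (if p < 0 then ⊤ else ⊥)
    else (if p < r then ⊤ else if p < 0 then ac else ⊥)
  v := fun q =>
    if 0 < r then (if q ≤ 0 then ⊥ else if q ≤ r then ac else ⊤)
    else if r = 0 then (if q ≤ 0 then ⊥ else ⊤)
    else (if q ≤ r then ⊥ else if q ≤ 0 then a else ⊤)

/-- Iterated sum of a finite list of pairs. -/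
noncomputable def sumMP {L : Type*} [Order.Frame L] : List (MP L) → MP L
  | [] => zeroMP L
  | [f] => f
  | f :: g :: fs => f.add (sumMP (g :: fs))

/-- `f` takes the constant value `x` on the part `c`. -/
structure HasVal {L : Type*} [Order.Frame L] (c : L) (f : MP L) (x : ℚ) : Prop where
  u1 : ∀ p, p < x → c ≤ f.u p
  u2 : ∀ p, x ≤ p → c ⊓ f.u p = ⊥
  v1 : ∀ q, x < q → c ≤ f.v q
  v2 : ∀ q, q ≤ x → c ⊓ f.v q = ⊥

theorem HasVal.add {L : Type*} [Order.Frame L] {c : L} {f g : MP L} {x y : ℚ}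
    (hf : HasVal c f x) (hg : HasVal c g y) : HasVal c (f.add g) (x + y) where
  u1 p hp := le_trans (le_inf (hf.u1 (x - (x + y - p) / 2) (by linarith))
      (hg.u1 (p - (x - (x + y - p) / 2)) (by linarith)))
      (le_iSup (fun t => f.u t ⊓ g.u (p - t)) _)
  v1 p hp := le_trans (le_inf (hf.v1 (x - (x + y - p) / 2) (by linarith))
      (hg.v1 (p - (x - (x + y - p) / 2)) (by linarith)))
      (le_iSup (fun t => f.v t ⊓ g.v (p - t)) _)
  u2 p hp := by
    change c ⊓ (⨆ t : ℚ, f.u t ⊓ g.u (p - t)) = ⊥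
    rw [inf_iSup_eq, iSup_eq_bot]
    intro t
    rcases le_total x t with h | h
    · exact le_bot_iff.1 ((inf_le_inf_left c inf_le_left).trans (hf.u2 t h).le)
    · exact le_bot_iff.1 ((inf_le_inf_left c inf_le_right).trans
        (hg.u2 (p - t) (by linarith)).le)
  v2 p hp := by
    change c ⊓ (⨆ t : ℚ, f.v t ⊓ g.v (p - t)) = ⊥
    rw [inf_iSup_eq, iSup_eq_bot]
    intro t
    rcases le_total t x with h | h
    · exact le_bot_iff.1 ((inf_le_inf_left c inf_le_left).trans (hf.v2 t h).le)
    · exact le_bot_iff.1 ((inf_le_inf_left c inf_le_right).trans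
        (hg.v2 (p - t) (by linarith)).le)

theorem hasVal_zero {L : Type*} [Order.Frame L] (c : L) : HasVal c (zeroMP L) 0 := by
  constructor <;> intro p hp <;> simp [zeroMP, hp, not_lt.2, not_le.2]

theorem hasVal_sum {L : Type*} [Order.Frame L] {ι : Type*} (c : L) (F : ι → MP L) (x : ι → ℚ)
    (h : ∀ i, HasVal c (F i) (x i)) :
    ∀ l : List ι, HasVal c (sumMP (l.map F)) (l.map x).sum
  | [] => hasVal_zero c
  | [i] => by simpa [sumMP] using h i
  | i :: j :: l => by
    have := (h i).add (hasVal_sum c F x h (j :: l))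
    simpa [sumMP] using this

theorem hasVal_sChi_self {L : Type*} [Order.Frame L] (r : ℚ) (a ac : L) (h : IsCompl a ac) :
    HasVal a (sChi r a ac) r := by
  have hb := h.inf_eq_bot
  constructor <;> intro p hp <;> simp only [sChi] <;> split_ifs <;>
    first | exact le_top | exact le_rfl | exact inf_bot_eq _ | exact hb | (exfalso; grind)

theorem hasVal_sChi_zero {L : Type*} [Order.Frame L] (r : ℚ) (a ac c : L) (h : IsCompl a ac)
    (hc : c ⊓ a = ⊥) : HasVal c (sChi r a ac) 0 := by
  have hb : c ≤ ac := h.disjoint_left_iff.1 (disjoint_iff.2 hc)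
  constructor <;> intro p hp <;> simp only [sChi] <;> split_ifs <;>
    first | exact le_top | exact hb | exact inf_bot_eq _ | exact hc | (exfalso; grind)

theorem eq_iSup_of_pieces {L : Type*} [Order.Frame L] {ι : Type*} (a : ι → L)
    (hcov : (⨆ i, a i) = ⊤) (w : L) (P : ι → Prop) (h1 : ∀ i, P i → a i ≤ w)
    (h2 : ∀ i, ¬ P i → a i ⊓ w = ⊥) : w = ⨆ i, ⨆ _ : P i, a i := by
  apply le_antisymm
  · calc w = (⨆ i, a i) ⊓ w := by rw [hcov, top_inf_eq]
      _ = ⨆ i, a i ⊓ w := iSup_inf_eq _ _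
      _ ≤ _ := by
        refine iSup_le fun i => ?_
        by_cases h : P i
        · exact inf_le_left.trans (le_iSup₂ (f := fun i (_ : P i) => a i) i h)
        · rw [h2 i h]; exact bot_le
  · exact iSup₂_le h1

/-- The values of a simple function in canonical form: for
`f = Σ_{i=1}^{n} r_i·χ_{a_i}` with `r_1 < ⋯ < r_n` and pairwise disjoint complemented
`a_i` joining to `⊤`, the components `u_f` and `v_f` are given by the canonical
step formulas. -/
theorem canonical_form_values {L : Type*} [Order.Frame L]
    (n : ℕ) (hn : 0 < n) (r : Fin n → ℚ) (hr : StrictMono r)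
    (a ac : Fin n → L) (ha : ∀ i, IsCompl (a i) (ac i))
    (hdisj : ∀ i j, i ≠ j → a i ⊓ a j = ⊥) (hcov : (⨆ i, a i) = ⊤)
    (f : MP L) (hf : f = sumMP (List.ofFn fun i => sChi (r i) (a i) (ac i))) :
    (∀ p : ℚ, p < r ⟨0, hn⟩ → f.u p = ⊤) ∧
    (∀ (p : ℚ) (j : Fin n) (hj : (j : ℕ) + 1 < n),
      r j ≤ p → p < r ⟨(j : ℕ) + 1, hj⟩ → f.u p = ⨆ i, ⨆ _ : j < i, a i) ∧
    (∀ p : ℚ, r ⟨n - 1, by omega⟩ ≤ p → f.u p = ⊥) ∧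
    (∀ q : ℚ, q ≤ r ⟨0, hn⟩ → f.v q = ⊥) ∧
    (∀ (q : ℚ) (j : Fin n) (hj : (j : ℕ) + 1 < n),
      r j < q → q ≤ r ⟨(j : ℕ) + 1, hj⟩ → f.v q = ⨆ i, ⨆ _ : i ≤ j, a i) ∧
    (∀ q : ℚ, r ⟨n - 1, by omega⟩ < q → f.v q = ⊤) := by
  have hv : ∀ k, HasVal (a k) f (r k) := by
    intro k
    have := hasVal_sum (a k) (fun i => sChi (r i) (a i) (ac i)) (fun i => if i = k then r i else 0)
      (fun i => by
        by_cases h : i = k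
        · subst h; simpa using hasVal_sChi_self (r i) (a i) (ac i) (ha i)
        · simpa [h] using hasVal_sChi_zero (r i) (a i) (ac i) (a k) (ha i)
            (hdisj k i (Ne.symm h))) (List.finRange n)
    rw [← List.ofFn_eq_map, ← List.ofFn_eq_map, ← hf, List.sum_ofFn] at this
    simpa using this
  have hu : ∀ (p : ℚ) (P : Fin n → Prop), (∀ i, P i ↔ p < r i) → f.u p = ⨆ i, ⨆ _ : P i, a i :=
    fun p P h => eq_iSup_of_pieces a hcov _ P (fun i hi => (hv i).u1 p ((h i).1 hi))
      (fun i hi => (hv i).u2 p (not_lt.1 fun h' => hi ((h i).2 h')))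
  have hw : ∀ (p : ℚ) (P : Fin n → Prop), (∀ i, P i ↔ r i < p) → f.v p = ⨆ i, ⨆ _ : P i, a i :=
    fun p P h => eq_iSup_of_pieces a hcov _ P (fun i hi => (hv i).v1 p ((h i).1 hi))
      (fun i hi => (hv i).v2 p (not_lt.1 fun h' => hi ((h i).2 h')))
  have h0 : ∀ i, r ⟨0, hn⟩ ≤ r i := fun i => hr.monotone (Fin.mk_le_of_le_val (Nat.zero_le _))
  have hl : ∀ i, r i ≤ r ⟨n - 1, by omega⟩ := fun i => hr.monotone (by
    rw [Fin.le_def]; have := i.2; simp only; omega)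
  have hs : ∀ (j : Fin n) (hj : (j : ℕ) + 1 < n) (i : Fin n), j < i → r ⟨(j : ℕ) + 1, hj⟩ ≤ r i :=
    fun j hj i h => hr.monotone (by rw [Fin.le_def]; rw [Fin.lt_def] at h; simp only; omega)
  refine ⟨fun p hp => ?_, fun p j hj h1 h2 => ?_, fun p hp => ?_,
    fun p hp => ?_, fun p j hj h1 h2 => ?_, fun p hp => ?_⟩
  · rw [hu p (fun _ => True) (fun i => by simpa using hp.trans_le (h0 i))]; simpa using hcov
  · exact hu p _ fun i => ⟨fun h => h2.trans_le (hs j hj i h),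
      fun h => hr.lt_iff_lt.1 (h1.trans_lt h)⟩
  · rw [hu p (fun _ => False) (fun i => by simpa using (hl i).trans hp)]; simp
  · rw [hw p (fun _ => False) (fun i => by simpa using hp.trans (h0 i))]; simp
  · exact hw p _ fun i => ⟨fun h => (hr.monotone h).trans_lt h1,
      fun h => not_lt.1 fun h' => absurd (h2.trans (hs j hj i h')) (not_le.2 h)⟩
  · rw [hw p (fun _ => True) (fun i => by simpa using (hl i).trans_lt hp)]; simpa using hcov
end

section
/- Let L be a frame, r_1 < ⋯ < r_n rationals, and a_1, …, a_n pairwise disjoint complemented elements of L. Let g := Σ_{i=1}^{n} r_i·χ_{a_i} with components (u_g, v_g). Let b be a complemented element of L with bᶜ ⊓ v_g 0 = ⊥. Then a_i ≤ b for every i with r_i < 0. (This is the lattice content of the fact that if θ_Sᶜ ∧ g(—,0) = 0 for a complemented σ-sublocale S, then the integral of g over S is nonnegative: each σ-sublocale carrying a negative coefficient lies inside Sᶜ, so it contributes measure zero.) -/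
/-- If `c ≤ (F i).v q` for all `q > s i`, then `c` lies below the iterated sum past `∑ s i`. -/
theorem le_sumMP_v {L : Type*} [Order.Frame L] (c : L) :
    ∀ (n : ℕ) (F : Fin n → MP L) (s : Fin n → ℚ),
      (∀ i q, s i < q → c ≤ (F i).v q) →
      ∀ q, ∑ i, s i < q → c ≤ (sumMP (List.ofFn F)).v q := by
  intro n
  induction n with
  | zero =>
    intro F s _ q hq
    simp only [Finset.univ_eq_empty, Finset.sum_empty] at hq
    simp [sumMP, zeroMP, not_le.mpr hq]
  | succ m ih =>
    intro F s h q hq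
    rw [Fin.sum_univ_succ] at hq
    have ih' := ih (fun i => F i.succ) (fun i => s i.succ) (fun i => h i.succ)
    rw [List.ofFn_succ]
    cases m with
    | zero =>
      simp only [Finset.univ_eq_empty, Finset.sum_empty, add_zero] at hq
      simpa [sumMP] using h 0 q hq
    | succ k =>
      have e : sumMP (F 0 :: List.ofFn fun i : Fin (k+1) => F i.succ)
          = (F 0).add (sumMP (List.ofFn fun i : Fin (k+1) => F i.succ)) := by
        rw [List.ofFn_succ]; rfl
      rw [e]
      obtain ⟨t, ht1, ht2⟩ := exists_between
        (show s 0 < q - ∑ i : Fin (k+1), s i.succ by linarith)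
      exact le_trans (le_inf (h 0 t ht1) (ih' (q - t) (by linarith)))
        (le_iSup (fun t => (F 0).v t ⊓
          (sumMP (List.ofFn fun i : Fin (k+1) => F i.succ)).v (q - t)) t)

/-- If `g = Σ_{i=1}^{n} r_i·χ_{a_i}` with pairwise disjoint complemented `a_i`, and `b`
is a complemented element with `bᶜ ⊓ v_g 0 = ⊥`, then `a_i ≤ b` whenever `r_i < 0`. -/
theorem neg_coeff_le_of_compl_inf_bot {L : Type*} [Order.Frame L]
    (n : ℕ) (r : Fin n → ℚ)
    (a ac : Fin n → L) (ha : ∀ i, IsCompl (a i) (ac i))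
    (hdisj : ∀ i j, i ≠ j → a i ⊓ a j = ⊥)
    (g : MP L) (hg : g = sumMP (List.ofFn fun i => sChi (r i) (a i) (ac i)))
    (b bc : L) (hb : IsCompl b bc) (hbv : bc ⊓ g.v 0 = ⊥) :
    ∀ i, r i < 0 → a i ≤ b := by
  intro i hi
  have key : a i ≤ g.v 0 := by
    rw [hg]
    refine le_sumMP_v (a i) n _ (fun j => if j = i then r i else 0) ?_ 0 (by simpa using hi)
    intro j q hq
    by_cases hj : j = i
    · subst hj
      simp only [if_true] at hq
      simp only [sChi, not_lt.mpr hi.le, hi.ne, not_le.mpr hq, if_false]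
      split_ifs
      · exact le_rfl
      · exact le_top
    · simp only [hj, if_false] at hq
      have hc : a i ≤ ac j :=
        (ha j).le_right_iff.mpr (disjoint_iff.mpr (hdisj i j (Ne.symm hj)))
      simp only [sChi, not_le.mpr hq, if_false]
      split_ifs with h1 h2 h3 h4
      · exact hc
      · exact le_top
      · exact le_top
      · exact absurd (h4.trans (not_lt.mp h1)) (not_le.mpr hq)
      · exact le_top
  refine hb.le_left_iff.mpr (disjoint_iff.mpr (le_bot_iff.mp ?_))
  rw [← hbv, inf_comm]
  exact inf_le_inf_left _ key
end
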